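/- Let m ≥ 0 with (m+2)γ > 1. Then for all t ≥ 1, R_m(t) ≤ C_m h(t) Q_m(t) with C_m = (2m+3)γ((m+2)γ - 1)^{-1}, where R_m(t) = ∫ₜ^∞ s^{-2} P_m(s) ds, P_m(t) = ∫₁^∞ s^{-γ} h(max(t,s)) h(s)^m ds, Q_m(t) = ∫₁^∞ s^{-γ}(max(t,s))^{-1} h(s)^m ds, and h(t) = ∫₁^∞ s^{-γ}(max(t,s))^{-1} ds. -/

import Mathlib

open MeasureTheory Real

noncomputable def h0 (γ t : ℝ) : ℝ := ∫ s in (1:ℝ)..t, s ^ (-γ)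

noncomputable def hfun (γ t : ℝ) : ℝ := ∫ s in Set.Ioi (1:ℝ), s ^ (-γ) * (max t s)⁻¹

noncomputable def Nfun (γ : ℝ) (m : ℕ) (t : ℝ) : ℝ := ∫ s in (1:ℝ)..t, s ^ (-γ) * (hfun γ s) ^ m

noncomputable def Qfun (γ : ℝ) (m : ℕ) (t : ℝ) : ℝ :=
  ∫ s in Set.Ioi (1:ℝ), s ^ (-γ) * (max t s)⁻¹ * (hfun γ s) ^ m

noncomputable def Pfun (γ : ℝ) (m : ℕ) (t : ℝ) : ℝ :=
  ∫ s in Set.Ioi (1:ℝ), s ^ (-γ) * hfun γ (max t s) * (hfun γ s) ^ m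

noncomputable def Rfun (γ : ℝ) (m : ℕ) (t : ℝ) : ℝ :=
  ∫ s in Set.Ioi t, s ^ (-2 : ℝ) * Pfun γ m s

/-!
Splitting the integrals at `t` gives `P = N h + I` and `Q = N / t + J` at `t`, where `N` is the
integral of `s ^ (-γ) * h s ^ m` over `(1, t)`, and `I`, `J` are those of `s ^ (-γ) * h s ^ (m + 1)`
and `s ^ (-γ - 1) * h s ^ m` over `(t, ∞)`. As `P` is antitone, `R t ≤ P t / t`, so it is enough
to bound `I` by a multiple of `t h J`. Since `h` has derivative `(1 - γ s h) / s ^ 2`, integrating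
the derivative of `s ^ (1 - γ) * h s ^ (m + 1)` gives
`((m + 2) γ - 1) I = t ^ (1 - γ) h ^ (m + 1) + (m + 1) J`. Both terms on the right are at most
`(m + 1) γ t h J`: the first because `s ^ γ * h s` is monotone, the second because `1 ≤ γ t h`.
The integrals converge and the boundary term at infinity vanishes because
`(max t s)⁻¹ ≤ t ^ (-δ) * s ^ (δ - 1)` for `0 ≤ δ ≤ 1`, which gives `h t = O(t ^ (-δ))` for
`δ < min γ 1`, and `δ` can be chosen with `γ + (m + 1) δ > 1`.
-/

open Set Filter Topology

section MaxTransform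

/-- The transform of `φ` with kernel `max` and weight `f` on `(a, ∞)`. The functions `h`, `Q_m` and
`P_m` are the cases `f = s ^ (-γ)`, `φ = s⁻¹`, then `f = s ^ (-γ) * h s ^ m`, `φ = s⁻¹`, and
`f = s ^ (-γ) * h s ^ m`, `φ = h`. -/
noncomputable def maxTransform (a : ℝ) (f φ : ℝ → ℝ) (t : ℝ) : ℝ :=
  ∫ s in Ioi a, f s * φ (max t s)

variable {a t : ℝ} {f φ : ℝ → ℝ}

lemma maxTransform_nonneg (hf : ∀ s ∈ Ioi a, 0 ≤ f s) (hφ : ∀ s ∈ Ioi a, 0 ≤ φ s) :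
    0 ≤ maxTransform a f φ t :=
  setIntegral_nonneg measurableSet_Ioi fun s hs ↦
    mul_nonneg (hf s hs) (hφ _ (mem_Ioi.2 (lt_max_of_lt_right hs)))

lemma eqOn_Ioc_mul_comp_max :
    EqOn (fun s ↦ f s * φ (max t s)) (fun s ↦ f s * φ t) (Ioc a t) :=
  fun s hs ↦ by simp only [max_eq_left hs.2]

lemma eqOn_Ioi_mul_comp_max :
    EqOn (fun s ↦ f s * φ (max t s)) (fun s ↦ f s * φ s) (Ioi t) :=
  fun s hs ↦ by simp only [max_eq_right (mem_Ioi.1 hs).le]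

lemma integrableOn_Ioc_mul_comp_max (hf : LocallyIntegrableOn f (Ici a)) :
    IntegrableOn (fun s ↦ f s * φ (max t s)) (Ioc a t) := by
  have hf' : IntegrableOn f (Ioc a t) :=
    (hf.integrableOn_compact_subset Icc_subset_Ici_self isCompact_Icc).mono_set Ioc_subset_Icc_self
  exact IntegrableOn.congr_fun (hf'.mul_const (φ t)) eqOn_Ioc_mul_comp_max.symm measurableSet_Ioc

lemma integrableOn_Ioi_mul_comp_max (hat : a ≤ t)
    (hfφ : IntegrableOn (fun s ↦ f s * φ s) (Ioi a)) :
    IntegrableOn (fun s ↦ f s * φ (max t s)) (Ioi t) :=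
  (hfφ.mono_set (Ioi_subset_Ioi hat)).congr_fun eqOn_Ioi_mul_comp_max.symm measurableSet_Ioi

lemma integrableOn_mul_comp_max (hat : a ≤ t) (hf : LocallyIntegrableOn f (Ici a))
    (hfφ : IntegrableOn (fun s ↦ f s * φ s) (Ioi a)) :
    IntegrableOn (fun s ↦ f s * φ (max t s)) (Ioi a) := by
  rw [← Ioc_union_Ioi_eq_Ioi hat]
  exact (integrableOn_Ioc_mul_comp_max hf).union (integrableOn_Ioi_mul_comp_max hat hfφ)

lemma maxTransform_eq_add (hat : a ≤ t) (hf : LocallyIntegrableOn f (Ici a))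
    (hfφ : IntegrableOn (fun s ↦ f s * φ s) (Ioi a)) :
    maxTransform a f φ t = (∫ s in a..t, f s) * φ t + ∫ s in Ioi t, f s * φ s := by
  rw [maxTransform, ← Ioc_union_Ioi_eq_Ioi hat,
    setIntegral_union (Ioc_disjoint_Ioi le_rfl) measurableSet_Ioi
      (integrableOn_Ioc_mul_comp_max hf) (integrableOn_Ioi_mul_comp_max hat hfφ),
    setIntegral_congr_fun measurableSet_Ioc eqOn_Ioc_mul_comp_max,
    setIntegral_congr_fun measurableSet_Ioi eqOn_Ioi_mul_comp_max,
    integral_mul_const, intervalIntegral.integral_of_le hat]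

lemma antitoneOn_maxTransform (hf : LocallyIntegrableOn f (Ici a))
    (hfφ : IntegrableOn (fun s ↦ f s * φ s) (Ioi a)) (hf0 : ∀ s ∈ Ioi a, 0 ≤ f s)
    (hφ : AntitoneOn φ (Ici a)) : AntitoneOn (maxTransform a f φ) (Ici a) :=
  fun _ ht _ hu htu ↦ setIntegral_mono_on (integrableOn_mul_comp_max hu hf hfφ)
    (integrableOn_mul_comp_max ht hf hfφ) measurableSet_Ioi fun s hs ↦
      mul_le_mul_of_nonneg_left
        (hφ (mem_Ici.2 (le_max_of_le_left ht)) (mem_Ici.2 (le_max_of_le_left hu))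
          (max_le_max_right s htu)) (hf0 s hs)

end MaxTransform

section Rpow

variable {γ δ s t : ℝ}

lemma continuousOn_rpow_const_Ioi (p : ℝ) : ContinuousOn (fun s : ℝ ↦ s ^ p) (Ioi 0) :=
  fun s hs ↦ (continuousAt_rpow_const s p (Or.inl (ne_of_gt hs))).continuousWithinAt

lemma locallyIntegrableOn_rpow_const (p : ℝ) :
    LocallyIntegrableOn (fun s : ℝ ↦ s ^ p) (Ici 1) :=
  ((continuousOn_rpow_const_Ioi p).mono (Ici_subset_Ioi.2 one_pos)).locallyIntegrableOn
    measurableSet_Ici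

lemma eqOn_rpow_neg_mul_inv :
    EqOn (fun s : ℝ ↦ s ^ (-γ) * s⁻¹) (fun s ↦ s ^ (-γ - 1)) (Ioi 0) :=
  fun s hs ↦ by simp only [rpow_sub_one (ne_of_gt hs), div_eq_mul_inv]

lemma integrableOn_Ioi_rpow_neg_mul_inv (hγ : 0 < γ) (ht : 0 < t) :
    IntegrableOn (fun s : ℝ ↦ s ^ (-γ) * s⁻¹) (Ioi t) :=
  (integrableOn_Ioi_rpow_of_lt (by linarith) ht).congr_fun
    (eqOn_rpow_neg_mul_inv.symm.mono (Ioi_subset_Ioi ht.le)) measurableSet_Ioi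

lemma integral_Ioi_rpow_neg_mul_inv (hγ : 0 < γ) (ht : 0 < t) :
    ∫ s in Ioi t, s ^ (-γ) * s⁻¹ = t ^ (-γ) / γ := by
  rw [setIntegral_congr_fun measurableSet_Ioi (eqOn_rpow_neg_mul_inv.mono (Ioi_subset_Ioi ht.le)),
    integral_Ioi_rpow_of_lt (by linarith) ht, sub_add_cancel, neg_div_neg_eq]

lemma rpow_neg_mul_rpow_mul_pow {m : ℕ} {x : ℝ} (hs : 0 < s) :
    s ^ (-((m + 1) * γ)) * (s ^ γ * x) ^ m = s ^ (-γ) * x ^ m := by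
  rw [mul_pow, ← mul_assoc, ← rpow_mul_natCast hs.le, ← rpow_add hs]
  ring_nf

lemma inv_max_le_rpow_mul_rpow (ht : 0 < t) (hs : 0 < s) (hδ0 : 0 ≤ δ) (hδ1 : δ ≤ 1) :
    (max t s)⁻¹ ≤ t ^ (-δ) * s ^ (δ - 1) := by
  have hM : 0 < max t s := lt_max_of_lt_left ht
  calc (max t s)⁻¹ = max t s ^ (-δ) * max t s ^ (δ - 1) := by
        rw [← rpow_add hM, ← rpow_neg_one]
        ring_nf
    _ ≤ t ^ (-δ) * s ^ (δ - 1) :=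
        mul_le_mul (rpow_le_rpow_of_nonpos ht (le_max_left t s) (by linarith))
          (rpow_le_rpow_of_nonpos hs (le_max_right t s) (by linarith))
          (by positivity) (by positivity)

lemma integral_Ioi_rpow_neg_two_mul_le_of_antitoneOn {F : ℝ → ℝ} (ht : 0 < t)
    (hF : AntitoneOn F (Ici t)) (hF0 : ∀ s ∈ Ioi t, 0 ≤ F s) :
    ∫ s in Ioi t, s ^ (-2 : ℝ) * F s ≤ t⁻¹ * F t := by
  have hconst : ∫ s in Ioi t, s ^ (-2 : ℝ) * F t = t⁻¹ * F t := by
    rw [integral_mul_const, integral_Ioi_rpow_of_lt (by norm_num) ht,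
      show (-2 : ℝ) + 1 = -1 by norm_num, rpow_neg_one, neg_div_neg_eq, div_one]
  rw [← hconst]
  refine integral_mono_of_nonneg ?_
    ((integrableOn_Ioi_rpow_of_lt (by norm_num) ht).mul_const _) ?_
  · filter_upwards [ae_restrict_mem measurableSet_Ioi] with s hs
    exact mul_nonneg (rpow_nonneg (ht.trans hs).le _) (hF0 s hs)
  · filter_upwards [ae_restrict_mem measurableSet_Ioi] with s hs
    exact mul_le_mul_of_nonneg_left (hF self_mem_Ici (mem_Ioi.1 hs).le (mem_Ioi.1 hs).le)
      (rpow_nonneg (ht.trans hs).le _)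

end Rpow

section Kernel

variable {γ δ t : ℝ}

lemma hasDerivAt_h0 (ht : 0 < t) : HasDerivAt (h0 γ) (t ^ (-γ)) t := by
  have hc := continuousOn_rpow_const_Ioi (-γ)
  have hsub : uIcc 1 t ⊆ Ioi 0 := fun s hs ↦ lt_of_lt_of_le (lt_min one_pos ht) hs.1
  exact intervalIntegral.integral_hasDerivAt_right (hc.mono hsub).intervalIntegrable
    (hc.stronglyMeasurableAtFilter isOpen_Ioi t ht) (hc.continuousAt (Ioi_mem_nhds ht))

lemma h0_nonneg (ht : 1 ≤ t) : 0 ≤ h0 γ t :=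
  intervalIntegral.integral_nonneg ht fun _ hs ↦ rpow_nonneg (zero_le_one.trans hs.1) _

lemma one_sub_mul_h0 (ht : 0 < t) : (1 - γ) * h0 γ t = t ^ (1 - γ) - 1 := by
  have hsub : uIcc 1 t ⊆ Ioi 0 := fun s hs ↦ lt_of_lt_of_le (lt_min one_pos ht) hs.1
  have hderiv : ∀ s ∈ uIcc 1 t, HasDerivAt (fun s ↦ s ^ (1 - γ)) ((1 - γ) * s ^ (-γ)) s :=
    fun s hs ↦ by
      simpa only [sub_sub_cancel_left] using
        hasDerivAt_rpow_const (p := 1 - γ) (Or.inl (ne_of_gt (hsub hs)))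
  rw [h0, ← intervalIntegral.integral_const_mul,
    intervalIntegral.integral_eq_sub_of_hasDerivAt hderiv
      (((continuousOn_rpow_const_Ioi _).mono hsub).intervalIntegrable.const_mul _), one_rpow]

lemma hfun_eq_maxTransform :
    hfun γ = maxTransform 1 (fun s ↦ s ^ (-γ)) (fun s ↦ s⁻¹) :=
  rfl

lemma hfun_eq_h0_div_add (hγ : 0 < γ) (ht : 1 ≤ t) :
    hfun γ t = h0 γ t / t + t ^ (-γ) / γ := by
  rw [hfun_eq_maxTransform, maxTransform_eq_add ht (locallyIntegrableOn_rpow_const _)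
    (integrableOn_Ioi_rpow_neg_mul_inv hγ one_pos),
    integral_Ioi_rpow_neg_mul_inv hγ (one_pos.trans_le ht), h0, ← div_eq_mul_inv]

lemma mul_hfun_eq_h0_add_one (hγ : 0 < γ) (ht : 1 ≤ t) :
    γ * t * hfun γ t = h0 γ t + 1 := by
  have ht0 : 0 < t := one_pos.trans_le ht
  have hpow : t ^ (1 - γ) = t * t ^ (-γ) := by rw [sub_eq_add_neg, rpow_add ht0, rpow_one]
  have hh0 := one_sub_mul_h0 (γ := γ) ht0
  rw [hpow] at hh0
  rw [hfun_eq_h0_div_add hγ ht]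
  field_simp
  linarith

lemma one_le_mul_hfun (hγ : 0 < γ) (ht : 1 ≤ t) : 1 ≤ γ * t * hfun γ t := by
  rw [mul_hfun_eq_h0_add_one hγ ht]
  exact le_add_of_nonneg_left (h0_nonneg ht)

lemma hfun_pos (hγ : 0 < γ) (ht : 1 ≤ t) : 0 < hfun γ t :=
  have ht0 : 0 < t := one_pos.trans_le ht
  pos_of_mul_pos_right (one_pos.trans_le (one_le_mul_hfun hγ ht)) (by positivity)

lemma hasDerivAt_hfun (hγ : 0 < γ) (ht : 1 < t) :
    HasDerivAt (hfun γ) (-h0 γ t / t ^ 2) t := by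
  have ht0 : 0 < t := one_pos.trans ht
  have hclosed := ((hasDerivAt_h0 (γ := γ) ht0).div (hasDerivAt_id t) ht0.ne').add
    ((hasDerivAt_rpow_const (p := -γ) (Or.inl ht0.ne')).div_const γ)
  have heq : hfun γ =ᶠ[𝓝 t] fun s ↦ h0 γ s / s + s ^ (-γ) / γ := by
    filter_upwards [Ioi_mem_nhds ht] with s hs using hfun_eq_h0_div_add hγ (le_of_lt hs)
  refine (hclosed.congr_of_eventuallyEq heq).congr_deriv ?_
  rw [rpow_sub_one ht0.ne', id]
  field_simp
  ring

lemma continuousOn_hfun (hγ : 0 < γ) : ContinuousOn (hfun γ) (Ici 1) := by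
  have hsub : Ici (1 : ℝ) ⊆ Ioi 0 := Ici_subset_Ioi.2 one_pos
  have h0_cont : ContinuousOn (h0 γ) (Ici 1) :=
    fun t ht ↦ (hasDerivAt_h0 (hsub ht)).continuousAt.continuousWithinAt
  refine ContinuousOn.congr ?_ fun t ht ↦ hfun_eq_h0_div_add hγ ht
  exact (h0_cont.div continuousOn_id fun t ht ↦ (hsub ht).ne').add
    (((continuousOn_rpow_const_Ioi _).mono hsub).div_const γ)

lemma antitoneOn_hfun (hγ : 0 < γ) : AntitoneOn (hfun γ) (Ici 1) := by
  rw [hfun_eq_maxTransform]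
  exact antitoneOn_maxTransform (locallyIntegrableOn_rpow_const _)
    (integrableOn_Ioi_rpow_neg_mul_inv hγ one_pos)
    (fun _ hs ↦ rpow_nonneg (one_pos.trans hs).le _)
    fun _ hs _ _ hsu ↦ inv_anti₀ (one_pos.trans_le hs) hsu

lemma hasDerivAt_rpow_mul_hfun (hγ : 0 < γ) (ht : 1 < t) :
    HasDerivAt (fun s ↦ s ^ γ * hfun γ s) (t ^ γ / t ^ 2) t := by
  have ht0 : 0 < t := one_pos.trans ht
  refine ((hasDerivAt_rpow_const (p := γ) (Or.inl ht0.ne')).mul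
    (hasDerivAt_hfun hγ ht)).congr_deriv ?_
  rw [rpow_sub_one ht0.ne']
  field_simp
  linear_combination mul_hfun_eq_h0_add_one hγ ht.le

lemma monotoneOn_rpow_mul_hfun (hγ : 0 < γ) :
    MonotoneOn (fun s ↦ s ^ γ * hfun γ s) (Ici 1) := by
  refine monotoneOn_of_hasDerivWithinAt_nonneg (f' := fun s ↦ s ^ γ / s ^ 2) (convex_Ici 1)
    (((continuousOn_rpow_const_Ioi γ).mono (Ici_subset_Ioi.2 one_pos)).mul (continuousOn_hfun hγ))
    ?_ ?_ <;> rw [interior_Ici]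
  · exact fun s hs ↦ (hasDerivAt_rpow_mul_hfun hγ hs).hasDerivWithinAt
  · exact fun s hs ↦ div_nonneg (rpow_nonneg (one_pos.trans hs).le _) (sq_nonneg s)

lemma hfun_le_mul_rpow_neg (ht : 0 < t) (hδ0 : 0 ≤ δ) (hδ1 : δ ≤ 1) (hδγ : δ < γ) :
    hfun γ t ≤ (γ - δ)⁻¹ * t ^ (-δ) := by
  have hint : ∫ s in Ioi (1 : ℝ), t ^ (-δ) * s ^ (δ - γ - 1) = (γ - δ)⁻¹ * t ^ (-δ) := by
    rw [integral_const_mul, integral_Ioi_rpow_of_lt (by linarith) one_pos, one_rpow,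
      sub_add_cancel, ← neg_sub γ δ, neg_div_neg_eq, one_div, mul_comm]
  rw [← hint]
  refine integral_mono_of_nonneg ?_
    ((integrableOn_Ioi_rpow_of_lt (by linarith) one_pos).const_mul _) ?_ <;>
    filter_upwards [ae_restrict_mem measurableSet_Ioi] with s hs <;>
    have hs0 : 0 < s := one_pos.trans hs
  · have : 0 < max t s := lt_max_of_lt_left ht
    positivity
  · calc s ^ (-γ) * (max t s)⁻¹ ≤ s ^ (-γ) * (t ^ (-δ) * s ^ (δ - 1)) := by
          gcongr
          exact inv_max_le_rpow_mul_rpow ht hs0 hδ0 hδ1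
      _ = t ^ (-δ) * s ^ (δ - γ - 1) := by
          rw [mul_left_comm, ← rpow_add hs0]
          ring_nf

end Kernel

section Weight

/-- The common weight `s ^ (-γ) * h s ^ m` of the integrals `N_m`, `Q_m` and `P_m`. -/
noncomputable def hWeight (γ : ℝ) (m : ℕ) (s : ℝ) : ℝ := s ^ (-γ) * hfun γ s ^ m

variable {γ t : ℝ} {m : ℕ}

lemma pos_of_one_lt_add_two_mul (hm : 1 < ((m : ℝ) + 2) * γ) : 0 < γ :=
  pos_of_mul_pos_right (one_pos.trans hm) (by positivity)

lemma hWeight_nonneg (hγ : 0 < γ) (ht : 1 ≤ t) : 0 ≤ hWeight γ m t :=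
  mul_nonneg (rpow_nonneg (zero_le_one.trans ht) _) (pow_nonneg (hfun_pos hγ ht).le _)

lemma continuousOn_hWeight (hγ : 0 < γ) : ContinuousOn (hWeight γ m) (Ici 1) :=
  ((continuousOn_rpow_const_Ioi _).mono (Ici_subset_Ioi.2 one_pos)).mul
    ((continuousOn_hfun hγ).pow m)

lemma locallyIntegrableOn_hWeight (hγ : 0 < γ) :
    LocallyIntegrableOn (hWeight γ m) (Ici 1) :=
  (continuousOn_hWeight hγ).locallyIntegrableOn measurableSet_Ici

lemma exists_hWeight_mul_hfun_le (hm : 1 < ((m : ℝ) + 2) * γ) :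
    ∃ p : ℝ, 1 < p ∧ ∃ K : ℝ, ∀ s : ℝ, 1 ≤ s → hWeight γ m s * hfun γ s ≤ K * s ^ (-p) := by
  have hγ := pos_of_one_lt_add_two_mul hm
  have hm1 : 0 < (m : ℝ) + 1 := by positivity
  have hgap : max 0 ((1 - γ) / (m + 1)) < min γ 1 := by
    refine max_lt (lt_min hγ one_pos) (lt_min ?_ ?_) <;> rw [div_lt_iff₀ hm1] <;> linarith
  obtain ⟨δ, hlow, hupp⟩ := exists_between hgap
  obtain ⟨hδ0, hδ⟩ := max_lt_iff.1 hlow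
  obtain ⟨hδγ, hδ1⟩ := lt_min_iff.1 hupp
  rw [div_lt_iff₀ hm1] at hδ
  refine ⟨γ + δ * (m + 1), by linarith, (γ - δ)⁻¹ ^ (m + 1), fun s hs ↦ ?_⟩
  have hs0 : 0 < s := one_pos.trans_le hs
  calc hWeight γ m s * hfun γ s = s ^ (-γ) * hfun γ s ^ (m + 1) := by rw [hWeight]; ring
    _ ≤ s ^ (-γ) * ((γ - δ)⁻¹ * s ^ (-δ)) ^ (m + 1) := by
        have := (hfun_pos hγ hs).le
        gcongr
        exact hfun_le_mul_rpow_neg hs0 hδ0.le hδ1.le hδγ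
    _ = (γ - δ)⁻¹ ^ (m + 1) * s ^ (-(γ + δ * (m + 1))) := by
        rw [mul_pow, ← rpow_mul_natCast hs0.le, mul_left_comm, ← rpow_add hs0]
        push_cast
        ring_nf

lemma integrableOn_hWeight_mul_hfun (hm : 1 < ((m : ℝ) + 2) * γ) :
    IntegrableOn (fun s ↦ hWeight γ m s * hfun γ s) (Ioi 1) := by
  have hγ := pos_of_one_lt_add_two_mul hm
  obtain ⟨p, hp, K, hK⟩ := exists_hWeight_mul_hfun_le hm
  refine Integrable.mono' ((integrableOn_Ioi_rpow_of_lt (neg_lt_neg hp) one_pos).const_mul K)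
    ((((continuousOn_hWeight hγ).mul (continuousOn_hfun hγ)).mono
      Ioi_subset_Ici_self).aestronglyMeasurable measurableSet_Ioi) ?_
  filter_upwards [ae_restrict_mem measurableSet_Ioi] with s hs
  have hs1 : 1 ≤ s := le_of_lt hs
  rw [norm_of_nonneg (mul_nonneg (hWeight_nonneg hγ hs1) (hfun_pos hγ hs1).le)]
  exact hK s hs1

lemma tendsto_mul_hWeight_mul_hfun (hm : 1 < ((m : ℝ) + 2) * γ) :
    Tendsto (fun s ↦ s * (hWeight γ m s * hfun γ s)) atTop (𝓝 0) := by
  have hγ := pos_of_one_lt_add_two_mul hm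
  obtain ⟨p, hp, K, hK⟩ := exists_hWeight_mul_hfun_le hm
  have hlim : Tendsto (fun s : ℝ ↦ K * s ^ (-(p - 1))) atTop (𝓝 0) := by
    simpa only [mul_zero] using (tendsto_rpow_neg_atTop (sub_pos.2 hp)).const_mul K
  refine tendsto_of_tendsto_of_tendsto_of_le_of_le' tendsto_const_nhds hlim ?_ ?_ <;>
    filter_upwards [eventually_ge_atTop 1] with s hs <;>
    have hs0 : 0 < s := one_pos.trans_le hs
  · exact mul_nonneg hs0.le (mul_nonneg (hWeight_nonneg hγ hs) (hfun_pos hγ hs).le)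
  · calc s * (hWeight γ m s * hfun γ s) ≤ s * (K * s ^ (-p)) :=
        mul_le_mul_of_nonneg_left (hK s hs) hs0.le
      _ = K * s ^ (-(p - 1)) := by
          rw [neg_sub', sub_neg_eq_add, rpow_add_one hs0.ne']
          ring

lemma integrableOn_hWeight_mul_inv (hγ : 0 < γ) :
    IntegrableOn (fun s ↦ hWeight γ m s * s⁻¹) (Ioi 1) := by
  refine Integrable.mono'
    ((integrableOn_Ioi_rpow_neg_mul_inv hγ one_pos).mul_const (hfun γ 1 ^ m))
    ((((continuousOn_hWeight hγ).mono Ioi_subset_Ici_self).mul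
      (continuousOn_inv₀.mono fun s hs ↦ (one_pos.trans hs).ne')).aestronglyMeasurable
        measurableSet_Ioi) ?_
  filter_upwards [ae_restrict_mem measurableSet_Ioi] with s hs
  have hs1 : 1 ≤ s := le_of_lt hs
  have : 0 < s := one_pos.trans hs
  have hpos := hfun_pos hγ hs1
  rw [hWeight, norm_of_nonneg (by positivity), mul_right_comm]
  gcongr
  exact antitoneOn_hfun hγ self_mem_Ici hs1 hs1

end Weight

section Tail

variable {γ t : ℝ} {m : ℕ}

lemma integral_Ioi_hWeight_mul_inv_nonneg (hγ : 0 < γ) (ht : 1 ≤ t) :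
    0 ≤ ∫ s in Ioi t, hWeight γ m s * s⁻¹ :=
  setIntegral_nonneg measurableSet_Ioi fun s hs ↦
    have hs1 : 1 ≤ s := ht.trans (le_of_lt hs)
    mul_nonneg (hWeight_nonneg hγ hs1) (inv_nonneg.2 (zero_le_one.trans hs1))

lemma hasDerivAt_mul_hWeight_mul_hfun (hγ : 0 < γ) (ht : 1 < t) :
    HasDerivAt (fun s ↦ s * (hWeight γ m s * hfun γ s))
      ((m + 1) * (hWeight γ m t * t⁻¹) - ((m + 2) * γ - 1) * (hWeight γ m t * hfun γ t)) t := by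
  have ht0 : 0 < t := one_pos.trans ht
  have hderiv := (hasDerivAt_id t).mul
    ((hasDerivAt_rpow_const (p := -γ) (Or.inl ht0.ne')).mul ((hasDerivAt_hfun hγ ht).pow (m + 1)))
  refine (hderiv.congr_of_eventuallyEq (.of_forall fun s ↦ ?_)).congr_deriv ?_
  · simp only [hWeight, Pi.mul_apply, Pi.pow_apply, id]
    ring
  · have hh0 : h0 γ t = γ * t * hfun γ t - 1 := by linarith [mul_hfun_eq_h0_add_one hγ ht.le]
    simp only [hWeight, Pi.mul_apply, Pi.pow_apply, id, hh0, rpow_sub_one ht0.ne',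
      add_tsub_cancel_right]
    push_cast
    field_simp
    ring

lemma mul_integral_Ioi_hWeight_mul_hfun (ht : 1 ≤ t) (hm : 1 < ((m : ℝ) + 2) * γ) :
    ((m + 2) * γ - 1) * ∫ s in Ioi t, hWeight γ m s * hfun γ s =
      t * (hWeight γ m t * hfun γ t) + (m + 1) * ∫ s in Ioi t, hWeight γ m s * s⁻¹ := by
  have hγ := pos_of_one_lt_add_two_mul hm
  have hI := (integrableOn_hWeight_mul_hfun hm).mono_set (Ioi_subset_Ioi ht)
  have hJ := (integrableOn_hWeight_mul_inv (m := m) hγ).mono_set (Ioi_subset_Ioi ht)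
  have hcont : ContinuousOn (fun s ↦ s * (hWeight γ m s * hfun γ s)) (Ici 1) :=
    continuousOn_id.mul ((continuousOn_hWeight hγ).mul (continuousOn_hfun hγ))
  have hftc := integral_Ioi_of_hasDerivAt_of_tendsto
    ((hcont t ht).mono (Ici_subset_Ici.2 ht))
    (fun s hs ↦ hasDerivAt_mul_hWeight_mul_hfun hγ (ht.trans_lt hs))
    ((hJ.const_mul (m + 1 : ℝ)).sub (hI.const_mul ((m + 2) * γ - 1)))
    (tendsto_mul_hWeight_mul_hfun hm)
  rw [integral_sub (hJ.const_mul _) (hI.const_mul _), integral_const_mul,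
    integral_const_mul] at hftc
  linarith

lemma hWeight_le_mul_integral_Ioi (hγ : 0 < γ) (ht : 1 ≤ t) :
    hWeight γ m t ≤ (m + 1) * γ * ∫ s in Ioi t, hWeight γ m s * s⁻¹ := by
  have ht0 : 0 < t := one_pos.trans_le ht
  have hexp : 0 < (m + 1) * γ := by positivity
  have hle : ∀ s ∈ Ioi t, s ^ (-((m + 1) * γ)) * s⁻¹ * (t ^ γ * hfun γ t) ^ m ≤
      hWeight γ m s * s⁻¹ := fun s hs ↦ by
    have hts : t ≤ s := le_of_lt hs
    have hs0 : 0 < s := ht0.trans hs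
    have := (hfun_pos hγ ht).le
    calc s ^ (-((m + 1) * γ)) * s⁻¹ * (t ^ γ * hfun γ t) ^ m
        ≤ s ^ (-((m + 1) * γ)) * s⁻¹ * (s ^ γ * hfun γ s) ^ m := by
          gcongr ?_ * ?_ ^ m
          exact monotoneOn_rpow_mul_hfun hγ ht (ht.trans hts) hts
      _ = hWeight γ m s * s⁻¹ := by
          rw [mul_right_comm, rpow_neg_mul_rpow_mul_pow hs0, hWeight]
  calc hWeight γ m t
      = (m + 1) * γ * ∫ s in Ioi t, s ^ (-((m + 1) * γ)) * s⁻¹ * (t ^ γ * hfun γ t) ^ m := by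
        rw [integral_mul_const, integral_Ioi_rpow_neg_mul_inv hexp ht0,
          hWeight, ← rpow_neg_mul_rpow_mul_pow ht0, ← mul_assoc, mul_div_cancel₀ _ hexp.ne']
    _ ≤ (m + 1) * γ * ∫ s in Ioi t, hWeight γ m s * s⁻¹ := by
        refine mul_le_mul_of_nonneg_left ?_ hexp.le
        exact setIntegral_mono_on ((integrableOn_Ioi_rpow_neg_mul_inv hexp ht0).mul_const _)
          ((integrableOn_hWeight_mul_inv hγ).mono_set (Ioi_subset_Ioi ht))
          measurableSet_Ioi hle

lemma integral_Ioi_hWeight_mul_hfun_le (ht : 1 ≤ t) (hm : 1 < ((m : ℝ) + 2) * γ) :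
    ∫ s in Ioi t, hWeight γ m s * hfun γ s ≤
      2 * (m + 1) * γ * ((m + 2) * γ - 1)⁻¹ * hfun γ t *
        (t * ∫ s in Ioi t, hWeight γ m s * s⁻¹) := by
  have hγ := pos_of_one_lt_add_two_mul hm
  have : 0 < t := one_pos.trans_le ht
  have hh := (hfun_pos hγ ht).le
  have hJ := integral_Ioi_hWeight_mul_inv_nonneg (m := m) hγ ht
  have hparts := mul_integral_Ioi_hWeight_mul_hfun ht hm
  have hweight := hWeight_le_mul_integral_Ioi (m := m) hγ ht
  set I := ∫ s in Ioi t, hWeight γ m s * hfun γ s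
  set J := ∫ s in Ioi t, hWeight γ m s * s⁻¹
  have hboundary : t * (hWeight γ m t * hfun γ t) ≤ t * ((m + 1) * γ * J * hfun γ t) := by
    gcongr
  have hrest : (m + 1) * J * 1 ≤ (m + 1) * J * (γ * t * hfun γ t) := by
    gcongr
    exact one_le_mul_hfun hγ ht
  have hmul : ((m + 2) * γ - 1) * I ≤ 2 * (m + 1) * γ * hfun γ t * (t * J) := by linarith
  calc I ≤ ((m + 2) * γ - 1)⁻¹ * (2 * (m + 1) * γ * hfun γ t * (t * J)) :=
        (le_inv_mul_iff₀ (sub_pos.2 hm)).2 hmul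
    _ = _ := by ring

end Tail

section Transforms

variable {γ t : ℝ} {m : ℕ}

lemma Pfun_eq_maxTransform : Pfun γ m = maxTransform 1 (hWeight γ m) (hfun γ) := by
  funext t
  simp only [Pfun, maxTransform, hWeight, mul_right_comm]

lemma Qfun_eq_maxTransform : Qfun γ m = maxTransform 1 (hWeight γ m) (fun s ↦ s⁻¹) := by
  funext t
  simp only [Qfun, maxTransform, hWeight, mul_right_comm]

lemma Nfun_nonneg (hγ : 0 < γ) (ht : 1 ≤ t) : 0 ≤ Nfun γ m t :=
  intervalIntegral.integral_nonneg ht fun _ hs ↦ hWeight_nonneg hγ hs.1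

lemma Pfun_eq_add (ht : 1 ≤ t) (hm : 1 < ((m : ℝ) + 2) * γ) :
    Pfun γ m t = Nfun γ m t * hfun γ t + ∫ s in Ioi t, hWeight γ m s * hfun γ s := by
  rw [Pfun_eq_maxTransform, maxTransform_eq_add ht
    (locallyIntegrableOn_hWeight (pos_of_one_lt_add_two_mul hm))
    (integrableOn_hWeight_mul_hfun hm)]
  rfl

lemma Qfun_eq_add (hγ : 0 < γ) (ht : 1 ≤ t) :
    Qfun γ m t = Nfun γ m t * t⁻¹ + ∫ s in Ioi t, hWeight γ m s * s⁻¹ := by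
  rw [Qfun_eq_maxTransform, maxTransform_eq_add ht (locallyIntegrableOn_hWeight hγ)
    (integrableOn_hWeight_mul_inv hγ)]
  rfl

lemma Pfun_nonneg (hγ : 0 < γ) : 0 ≤ Pfun γ m t := by
  rw [Pfun_eq_maxTransform]
  exact maxTransform_nonneg (fun s hs ↦ hWeight_nonneg hγ (le_of_lt hs))
    fun s hs ↦ (hfun_pos hγ (le_of_lt hs)).le

lemma Qfun_nonneg (hγ : 0 < γ) : 0 ≤ Qfun γ m t := by
  rw [Qfun_eq_maxTransform]
  exact maxTransform_nonneg (fun s hs ↦ hWeight_nonneg hγ (le_of_lt hs))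
    fun s hs ↦ inv_nonneg.2 (one_pos.trans hs).le

lemma antitoneOn_Pfun (hm : 1 < ((m : ℝ) + 2) * γ) : AntitoneOn (Pfun γ m) (Ici 1) := by
  have hγ := pos_of_one_lt_add_two_mul hm
  rw [Pfun_eq_maxTransform]
  exact antitoneOn_maxTransform (locallyIntegrableOn_hWeight hγ)
    (integrableOn_hWeight_mul_hfun hm)
    (fun s hs ↦ hWeight_nonneg hγ (le_of_lt hs)) (antitoneOn_hfun hγ)

lemma Rfun_le_inv_mul_Pfun (ht : 1 ≤ t) (hm : 1 < ((m : ℝ) + 2) * γ) :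
    Rfun γ m t ≤ t⁻¹ * Pfun γ m t :=
  integral_Ioi_rpow_neg_two_mul_le_of_antitoneOn (one_pos.trans_le ht)
    ((antitoneOn_Pfun hm).mono (Ici_subset_Ici.2 ht))
    fun _ _ ↦ Pfun_nonneg (pos_of_one_lt_add_two_mul hm)

end Transforms

theorem stmt_18_general (γ t : ℝ) (ht : 1 ≤ t) (m : ℕ) (hm : 1 < ((m : ℝ) + 2) * γ) :
    Rfun γ m t ≤ 2 * ((m : ℝ) + 1) * γ * (((m : ℝ) + 2) * γ - 1)⁻¹
      * hfun γ t * Qfun γ m t := by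
  have hγ : 0 < γ := pos_of_one_lt_add_two_mul hm
  have : 0 < t := one_pos.trans_le ht
  have hNh : 0 ≤ Nfun γ m t * hfun γ t := mul_nonneg (Nfun_nonneg hγ ht) (hfun_pos hγ ht).le
  have htail := integral_Ioi_hWeight_mul_hfun_le ht hm
  have hC : 1 ≤ 2 * ((m : ℝ) + 1) * γ * (((m : ℝ) + 2) * γ - 1)⁻¹ := by
    rw [← div_eq_mul_inv, one_le_div (sub_pos.2 hm)]
    linarith [mul_nonneg m.cast_nonneg hγ.le]
  set C := 2 * ((m : ℝ) + 1) * γ * (((m : ℝ) + 2) * γ - 1)⁻¹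
  set I := ∫ s in Ioi t, hWeight γ m s * hfun γ s
  set J := ∫ s in Ioi t, hWeight γ m s * s⁻¹
  calc Rfun γ m t ≤ t⁻¹ * Pfun γ m t := Rfun_le_inv_mul_Pfun ht hm
    _ = t⁻¹ * (Nfun γ m t * hfun γ t + I) := by rw [Pfun_eq_add ht hm]
    _ ≤ t⁻¹ * (C * (Nfun γ m t * hfun γ t) + C * hfun γ t * (t * J)) := by
        gcongr ?_ * (?_ + ?_)
        exact le_mul_of_one_le_left hNh hC
    _ = C * hfun γ t * (Nfun γ m t * t⁻¹ + J) := by field_simp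
    _ = C * hfun γ t * Qfun γ m t := by rw [Qfun_eq_add hγ ht]

theorem stmt_18 (γ t : ℝ) (hγ : 0 < γ) (hγ1 : γ ≤ 1) (ht : 1 ≤ t) (m : ℕ)
    (hm : 1 < ((m : ℝ) + 2) * γ) :
    Rfun γ m t ≤ (2 * (m : ℝ) + 3) * γ * (((m : ℝ) + 2) * γ - 1)⁻¹
      * hfun γ t * Qfun γ m t := by
  refine (stmt_18_general γ t ht m hm).trans ?_
  have := hfun_pos hγ ht
  have := Qfun_nonneg (m := m) (t := t) hγ
  have : 0 < ((m : ℝ) + 2) * γ - 1 := sub_pos.2 hm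
  gcongr
  linarith
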